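/- Define $f : \mathbb{C}^2 \to \mathbb{C}^3$ by $f(u,v) = (u^2,\ v^2,\ u^3 + v^3 + uv)$. Then the closure in $\mathbb{C}^2$ of the set $\{(u,v) : \exists (u',v') \neq (u,v) \text{ with } f(u,v) = f(u',v')\}$ equals the zero set $\{(u,v) \in \mathbb{C}^2 : (u+v^2)(u^2+v)(u^3+v^3) = 0\}$. -/

import Mathlib

/-- The corank-2 germ `(u,v) ↦ (u², v², u³ + v³ + uv)`. -/
def fc2 (q : ℂ × ℂ) : ℂ × ℂ × ℂ :=
  (q.1 ^ 2, q.2 ^ 2, q.1 ^ 3 + q.2 ^ 3 + q.1 * q.2)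

/-!
Since `u²` and `v²` determine `u` and `v` up to sign, the points of a fibre of `fc2` differ by sign
changes. Changing the sign of `u`, of `v`, or of both preserves `u³ + v³ + uv` exactly when
`u (u² + v) = 0`, `v (u + v²) = 0`, or `u³ + v³ = 0`, respectively; these are the three components
of the curve. The sign changes fix the origin, which is therefore the only point of the curve that
is not a double point, but it is a limit of points of the line `u + v = 0`.
-/

open Filter Topology

theorem closure_sdiff_singleton_of_accPt {X : Type*} [TopologicalSpace X] {s : Set X} {x : X}
    (h : AccPt x (𝓟 s)) : closure (s \ {x}) = closure s := by
  have hx : x ∈ closure (s \ {x}) :=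
    mem_closure_iff_clusterPt.mpr (accPt_principal_iff_clusterPt.mp h)
  refine (closure_mono Set.sdiff_subset).antisymm ?_
  refine closure_minimal (fun y hy ↦ ?_) isClosed_closure
  rcases eq_or_ne y x with rfl | hyx
  · exact hx
  · exact subset_closure ⟨hy, hyx⟩

theorem accPt_zero_of_smul_mem (𝕜 : Type*) {E : Type*} [NontriviallyNormedField 𝕜]
    [AddCommGroup E] [Module 𝕜 E] [TopologicalSpace E] [ContinuousSMul 𝕜 E]
    {s : Set E} {v : E} (hv : v ≠ 0) (hs : ∀ t : 𝕜, t • v ∈ s) : AccPt 0 (𝓟 s) := by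
  have h0 : AccPt (0 : 𝕜) ⊤ := by
    simpa only [AccPt, inf_top_eq] using NormedField.nhdsNE_neBot (0 : 𝕜)
  have hline : AccPt ((0 : 𝕜) • v) (map (fun t : 𝕜 ↦ t • v) ⊤) :=
    h0.map (by fun_prop) (smul_left_injective 𝕜 hv)
  rw [zero_smul] at hline
  exact hline.mono (le_principal_iff.mpr (mem_map.mpr (univ_mem' hs)))

/-- The set of points that share their image under `f` with another point; its closure is the
double point set `D(f)`. -/
def doublePoints {X Y : Type*} (f : X → Y) : Set X :=
  {x | ∃ y, y ≠ x ∧ f x = f y}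

/-- The plane curve `(u + v²)(u² + v)(u³ + v³) = 0`; removing the origin leaves the
set of double points of `fc2`. -/
def fc2DoubleCurve : Set (ℂ × ℂ) :=
  {q | (q.1 + q.2 ^ 2) * (q.1 ^ 2 + q.2) * (q.1 ^ 3 + q.2 ^ 3) = 0}

theorem eq_or_neg_of_fc2_eq {u v : ℂ} {q : ℂ × ℂ} (h : fc2 (u, v) = fc2 q) :
    q = (u, v) ∨ q = (-u, v) ∨ q = (u, -v) ∨ q = (-u, -v) := by
  obtain ⟨a, b⟩ := q
  simp only [fc2, Prod.mk.injEq] at h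
  obtain ⟨hu, hv, -⟩ := h
  rcases sq_eq_sq_iff_eq_or_eq_neg.mp hu.symm with rfl | rfl <;>
    rcases sq_eq_sq_iff_eq_or_eq_neg.mp hv.symm with rfl | rfl <;> simp

theorem fc2_eq_fc2_neg_fst_iff {u v : ℂ} :
    fc2 (u, v) = fc2 (-u, v) ↔ u * (u ^ 2 + v) = 0 := by
  simp only [fc2, Prod.mk.injEq, neg_sq, true_and]
  constructor <;> intro h
  · linear_combination h / 2
  · linear_combination 2 * h

theorem fc2_eq_fc2_neg_snd_iff {u v : ℂ} :
    fc2 (u, v) = fc2 (u, -v) ↔ v * (u + v ^ 2) = 0 := by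
  simp only [fc2, Prod.mk.injEq, neg_sq, true_and]
  constructor <;> intro h
  · linear_combination h / 2
  · linear_combination 2 * h

theorem fc2_eq_fc2_neg_neg_iff {u v : ℂ} :
    fc2 (u, v) = fc2 (-u, -v) ↔ u ^ 3 + v ^ 3 = 0 := by
  simp only [fc2, Prod.mk.injEq, neg_sq, true_and]
  constructor <;> intro h
  · linear_combination h / 2
  · linear_combination 2 * h

theorem mem_doublePoints_fc2_iff {u v : ℂ} :
    (u, v) ∈ doublePoints fc2 ↔
      (u ≠ 0 ∧ u ^ 2 + v = 0) ∨ (v ≠ 0 ∧ u + v ^ 2 = 0) ∨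
        ((u, v) ≠ 0 ∧ u ^ 3 + v ^ 3 = 0) := by
  have sign_changes : (u, v) ∈ doublePoints fc2 ↔
      ((-u, v) ≠ (u, v) ∧ fc2 (u, v) = fc2 (-u, v)) ∨
      ((u, -v) ≠ (u, v) ∧ fc2 (u, v) = fc2 (u, -v)) ∨
      ((-u, -v) ≠ (u, v) ∧ fc2 (u, v) = fc2 (-u, -v)) := by
    constructor
    · rintro ⟨q, hne, hq⟩
      rcases eq_or_neg_of_fc2_eq hq with rfl | rfl | rfl | rfl
      · exact absurd rfl hne
      · exact .inl ⟨hne, hq⟩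
      · exact .inr (.inl ⟨hne, hq⟩)
      · exact .inr (.inr ⟨hne, hq⟩)
    · rintro (h | h | h) <;> exact ⟨_, h⟩
  rw [sign_changes, fc2_eq_fc2_neg_fst_iff, fc2_eq_fc2_neg_snd_iff, fc2_eq_fc2_neg_neg_iff]
  simp only [ne_eq, Prod.mk.injEq, Prod.mk_eq_zero, CharZero.neg_eq_self_iff, and_true, true_and,
    mul_eq_zero]
  tauto

theorem doublePoints_fc2 : doublePoints fc2 = fc2DoubleCurve \ {0} := by
  ext ⟨u, v⟩
  have fst_ne_zero_iff (h : u ^ 2 + v = 0) : u ≠ 0 ↔ (u, v) ≠ 0 := by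
    rw [eq_neg_of_add_eq_zero_right h]
    simp
  have snd_ne_zero_iff (h : u + v ^ 2 = 0) : v ≠ 0 ↔ (u, v) ≠ 0 := by
    rw [eq_neg_of_add_eq_zero_left h]
    simp
  rw [mem_doublePoints_fc2_iff, and_congr_left fst_ne_zero_iff, and_congr_left snd_ne_zero_iff]
  simp only [fc2DoubleCurve, Set.mem_sdiff, Set.mem_ofPred_eq, Set.mem_singleton_iff, mul_eq_zero]
  tauto

theorem isClosed_fc2DoubleCurve : IsClosed fc2DoubleCurve :=
  isClosed_eq (by fun_prop) continuous_const

theorem accPt_zero_fc2DoubleCurve : AccPt 0 (𝓟 fc2DoubleCurve) := by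
  have antidiagonal_mem (t : ℂ) : t • ((1, -1) : ℂ × ℂ) ∈ fc2DoubleCurve := by
    simp only [fc2DoubleCurve, Set.mem_ofPred_eq, Prod.smul_mk, smul_eq_mul]
    ring
  exact accPt_zero_of_smul_mem ℂ (by simp) antidiagonal_mem

theorem stmt15 :
    closure {q : ℂ × ℂ | ∃ q' : ℂ × ℂ, q' ≠ q ∧ fc2 q = fc2 q'} =
      {q : ℂ × ℂ | (q.1 + q.2 ^ 2) * (q.1 ^ 2 + q.2) * (q.1 ^ 3 + q.2 ^ 3) = 0} := by
  change closure (doublePoints fc2) = fc2DoubleCurve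
  rw [doublePoints_fc2, closure_sdiff_singleton_of_accPt accPt_zero_fc2DoubleCurve,
    isClosed_fc2DoubleCurve.closure_eq]
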